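/- For every integer n ≥ 2 there exists a finite left brace B such that B is simple, B is not a trivial brace, and the multiplicative group (B,·) of B is solvable of derived length exactly n + 1. -/

import Mathlib

/-- A witness that there is a finite simple non-trivial left brace whose multiplicative
group is solvable of derived length exactly `n + 1`. -/
structure SimpleSolvableBraceWitness (n : ℕ) : Type 1 where
  /-- the underlying set of the left brace -/
  B : Type
  /-- the additive abelian group structure -/
  [addgrp : AddCommGroup B]
  /-- the multiplicative group structure -/
  [grp : Group B]
  /-- the left brace compatibility law `a·(b+c)+a = a·b+a·c` -/
  compat : ∀ a b c : B, a * (b + c) + a = a * b + a * c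
  /-- the left brace is finite -/
  finiteB : Finite B
  /-- the left brace is not a trivial brace -/
  nontrivial_brace : ∃ a b : B, a * b ≠ a + b
  /-- the left brace is non-zero -/
  nonzero : ∃ x : B, x ≠ 0
  /-- the left brace is simple: its only ideals (normal subgroups of `(B,·)` closed
  under the lambda maps `λ_b(x) = b·x − b`) are `{0}` and `B` -/
  simple : ∀ N : Set B,
    ((1 : B) ∈ N ∧ (∀ x ∈ N, ∀ y ∈ N, x * y ∈ N) ∧ (∀ x ∈ N, x⁻¹ ∈ N) ∧
      (∀ g : B, ∀ x ∈ N, g * x * g⁻¹ ∈ N) ∧ (∀ b : B, ∀ x ∈ N, b * x - b ∈ N)) →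
    N = {(0 : B)} ∨ N = Set.univ
  /-- the multiplicative group is solvable of derived length exactly `n + 1` -/
  derived_length : derivedSeries B (n + 1) = ⊥ ∧ ∀ m < n + 1, derivedSeries B m ≠ ⊥

class LBrace (B : Type) extends Group B, AddCommGroup B where
  compat : ∀ a b c : B, a * (b + c) + a = a * b + a * c

namespace LBrace

theorem one_eq_zero {B : Type} [LBrace B] : (1 : B) = 0 := by
  have h := LBrace.compat (1 : B) 0 0
  simpa using h

theorem mul_add' {B : Type} [LBrace B] (a b c : B) : a * (b + c) = a * b + a * c - a := by
  rw [← LBrace.compat a b c]; abel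

theorem mul_zero' {B : Type} [LBrace B] (a : B) : a * 0 = a := by
  rw [← one_eq_zero, mul_one]

theorem zero_mul' {B : Type} [LBrace B] (a : B) : 0 * a = a := by
  rw [← one_eq_zero, one_mul]

end LBrace

open LBrace

def IsIdl {B : Type} [LBrace B] (N : Set B) : Prop :=
  (1 : B) ∈ N ∧ (∀ x ∈ N, ∀ y ∈ N, x * y ∈ N) ∧ (∀ x ∈ N, x⁻¹ ∈ N) ∧
      (∀ g : B, ∀ x ∈ N, g * x * g⁻¹ ∈ N) ∧ (∀ b : B, ∀ x ∈ N, b * x - b ∈ N)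

/-- data of an equivariant symmetric biadditive map -/
structure AsymData (V T : Type) [AddCommGroup V] [LBrace T] [DistribMulAction T V] where
  b : V →+ V →+ T
  symm : ∀ v w, b v w = b w v
  equi : ∀ (g : T) v w, g * b v w = g + b (g • v) (g • w)

@[ext] structure Asym {V T : Type} [AddCommGroup V] [LBrace T] [DistribMulAction T V]
    (D : AsymData V T) where
  v : V
  t : T

namespace Asym

variable {V T : Type} [AddCommGroup V] [LBrace T] [DistribMulAction T V] {D : AsymData V T}

instance [Finite V] [Finite T] : Finite (Asym D) :=
  Finite.of_injective (fun x : Asym D => (x.v, x.t)) (by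
    intro x y h
    simp only [Prod.mk.injEq] at h
    exact Asym.ext h.1 h.2)

instance : Mul (Asym D) := ⟨fun x y => ⟨x.v + x.t • y.v, x.t * y.t⟩⟩
instance : One (Asym D) := ⟨⟨0, 1⟩⟩
instance : Inv (Asym D) := ⟨fun x => ⟨-(x.t⁻¹ • x.v), x.t⁻¹⟩⟩
instance : Add (Asym D) := ⟨fun x y => ⟨x.v + y.v, x.t + y.t + D.b x.v y.v⟩⟩
instance : Zero (Asym D) := ⟨⟨0, 0⟩⟩
instance : Neg (Asym D) := ⟨fun x => ⟨-x.v, -x.t + D.b x.v x.v⟩⟩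

@[simp] theorem mul_v (x y : Asym D) : (x * y).v = x.v + x.t • y.v := rfl
@[simp] theorem mul_t (x y : Asym D) : (x * y).t = x.t * y.t := rfl
@[simp] theorem one_v : (1 : Asym D).v = 0 := rfl
@[simp] theorem one_t : (1 : Asym D).t = 1 := rfl
@[simp] theorem inv_v (x : Asym D) : (x⁻¹).v = -(x.t⁻¹ • x.v) := rfl
@[simp] theorem inv_t (x : Asym D) : (x⁻¹).t = x.t⁻¹ := rfl
@[simp] theorem add_v (x y : Asym D) : (x + y).v = x.v + y.v := rfl
@[simp] theorem add_t (x y : Asym D) : (x + y).t = x.t + y.t + D.b x.v y.v := rfl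
@[simp] theorem zero_v : (0 : Asym D).v = 0 := rfl
@[simp] theorem zero_t : (0 : Asym D).t = 0 := rfl
@[simp] theorem neg_v (x : Asym D) : (-x).v = -x.v := rfl
@[simp] theorem neg_t (x : Asym D) : (-x).t = -x.t + D.b x.v x.v := rfl

instance : Group (Asym D) :=
  Group.ofLeftAxioms
    (by intro x y z; ext <;> simp [mul_assoc, mul_smul, add_assoc])
    (by intro x; ext <;> simp)
    (by intro x; ext <;> simp)

instance : AddGroup (Asym D) :=
  AddGroup.ofLeftAxioms
    (by intro x y z; ext
        · simp [add_assoc]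
        · simp; abel)
    (by intro x; ext <;> simp)
    (by intro x; ext <;> simp)

instance : AddCommGroup (Asym D) :=
  { (inferInstance : AddGroup (Asym D)) with
    add_comm := by
      intro x y; ext
      · simp [add_comm]
      · simp [add_comm x.t, D.symm x.v] }

@[simp] theorem sub_v (x y : Asym D) : (x - y).v = x.v - y.v := by
  simp [sub_eq_add_neg]
theorem sub_t (x y : Asym D) : (x - y).t = x.t - y.t + D.b y.v y.v - D.b x.v y.v := by
  simp [sub_eq_add_neg]; abel

instance : LBrace (Asym D) :=
  { (inferInstance : Group (Asym D)), (inferInstance : AddCommGroup (Asym D)) with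
    compat := by
      intro x y z
      ext
      · simp; abel
      · simp only [add_t, mul_t, mul_v, add_v, mul_add', D.equi, map_add, smul_add,
          AddMonoidHom.add_apply]
        rw [D.symm (x.t • y.v) x.v, D.symm (x.t • z.v) x.v]
        abel }

def proj : Asym D →* T where
  toFun := Asym.t
  map_one' := rfl
  map_mul' _ _ := rfl

theorem proj_surj : Function.Surjective (proj (D := D)) := fun t => ⟨⟨0, t⟩, rfl⟩

theorem der_bot {k : ℕ} (h : derivedSeries T k = ⊥) : derivedSeries (Asym D) (k + 1) = ⊥ := by
  have h1 : derivedSeries (Asym D) k ≤ (proj (D := D)).ker := by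
    have := map_derivedSeries_le_derivedSeries (proj (D := D)) k
    rw [h, le_bot_iff, Subgroup.map_eq_bot_iff] at this
    exact this
  rw [derivedSeries_succ, eq_bot_iff]
  refine (Subgroup.commutator_mono h1 h1).trans ?_
  rw [Subgroup.commutator_le]
  intro x hx y hy
  have hx' : x.t = 1 := hx
  have hy' : y.t = 1 := hy
  rw [Subgroup.mem_bot, commutatorElement_eq_one_iff_mul_comm]
  ext <;> simp [hx', hy', add_comm]

theorem der_ne_bot {k : ℕ} (h : derivedSeries T k ≠ ⊥)
    (hV : ∀ g : T, g ≠ 1 → ∃ u : V, u - g • u ≠ g • u - g • g • u) :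
    derivedSeries (Asym D) (k + 1) ≠ ⊥ := by
  intro hb
  obtain ⟨⟨g, hg⟩, hg0⟩ := Subgroup.ne_bot_iff_exists_ne_one.1 h
  have hg1 : g ≠ 1 := fun e => hg0 (Subtype.ext e)
  rw [← map_derivedSeries_eq (proj_surj (D := D)) k] at hg
  obtain ⟨x, hx, rfl⟩ := hg
  obtain ⟨u, hu⟩ := hV _ hg1
  apply hu
  let w : Asym D := ⟨u, 1⟩
  have hy : w * x * w⁻¹ ∈ derivedSeries (Asym D) k :=
    (derivedSeries_normal (Asym D) k).conj_mem x hx w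
  have hc := Subgroup.commutator_mem_commutator hy hx
  rw [← derivedSeries_succ, hb, Subgroup.mem_bot, commutatorElement_eq_one_iff_mul_comm] at hc
  have := congrArg Asym.v hc
  simp only [mul_v, mul_t, inv_v, inv_t, w, one_smul, inv_one, mul_one, one_mul, smul_neg,
    smul_add] at this
  change u - x.t • u = x.t • u - x.t • x.t • u
  have e : u + x.v + -(x.t • u) + x.t • x.v - (x.v + x.t • x.v) = u - x.t • u := by abel
  rw [← e, this]; abel

/-- restriction of an ideal -/
theorem res_idl {N : Set (Asym D)} (hN : IsIdl N) : IsIdl {t : T | (⟨0, t⟩ : Asym D) ∈ N} := by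
  obtain ⟨h1, h2, h3, h4, h5⟩ := hN
  refine ⟨h1, ?_, ?_, ?_, ?_⟩
  · intro x hx y hy
    have := h2 _ hx _ hy
    change (⟨0, x * y⟩ : Asym D) ∈ N
    convert this using 1
    ext <;> simp
  · intro x hx
    have := h3 _ hx
    change (⟨0, x⁻¹⟩ : Asym D) ∈ N
    convert this using 1
    ext <;> simp
  · intro g x hx
    have := h4 ⟨0, g⟩ _ hx
    change (⟨0, g * x * g⁻¹⟩ : Asym D) ∈ N
    convert this using 1
    ext <;> simp
  · intro g x hx
    have := h5 ⟨0, g⟩ _ hx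
    change (⟨0, g * x - g⟩ : Asym D) ∈ N
    convert this using 1
    ext <;> simp [sub_t]

theorem comm_mem {N : Set (Asym D)} (hN : IsIdl N) {g : T} (hg : (⟨0, g⟩ : Asym D) ∈ N) (u : V) :
    (⟨u - g • u, 1⟩ : Asym D) ∈ N := by
  obtain ⟨h1, h2, h3, h4, h5⟩ := hN
  have := h2 _ (h4 ⟨u, 1⟩ _ hg) _ (h3 _ hg)
  convert this using 1
  ext <;> simp [sub_eq_add_neg]

theorem b_mem {N : Set (Asym D)} (hN : IsIdl N) {x : Asym D} (hx : x ∈ N) (w : V) :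
    (⟨0, x.t⁻¹ * (x.t - D.b w x.v)⟩ : Asym D) ∈ N := by
  obtain ⟨h1, h2, h3, h4, h5⟩ := hN
  have := h2 _ (h3 _ hx) _ (h5 ⟨w, 1⟩ _ hx)
  convert this using 1
  ext
  · simp
  · simp [sub_t, D.symm w x.v]
    rw [one_eq_zero]; abel

theorem gen {N : Set (Asym D)} (hN : IsIdl N) {c : T}
    (hc : ∀ M : Set T, IsIdl M → c ∈ M → M = Set.univ)
    (hV : ∀ S : AddSubgroup V, (∀ (g : T) (u : V), u - g • u ∈ S) → S = ⊤)
    (hcN : (⟨0, c⟩ : Asym D) ∈ N) : N = Set.univ := by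
  have hT := hc _ (res_idl hN) hcN
  have hT' : ∀ t : T, (⟨0, t⟩ : Asym D) ∈ N := fun t => by
    have : t ∈ {t : T | (⟨0, t⟩ : Asym D) ∈ N} := by rw [hT]; trivial
    exact this
  have hcm := fun (g : T) (u : V) => comm_mem hN (hT' g) u
  obtain ⟨h1, h2, h3, h4, h5⟩ := hN
  let S : AddSubgroup V :=
    { carrier := {v | (⟨v, 1⟩ : Asym D) ∈ N}
      zero_mem' := h1
      add_mem' := by
        intro a b ha hb
        have := h2 _ ha _ hb
        change (⟨a + b, 1⟩ : Asym D) ∈ N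
        convert this using 1
        ext <;> simp
      neg_mem' := by
        intro a ha
        have := h3 _ ha
        change (⟨-a, 1⟩ : Asym D) ∈ N
        convert this using 1
        ext <;> simp }
  have hS := hV S hcm
  ext x
  simp only [Set.mem_univ, iff_true]
  have hv : x.v ∈ S := by rw [hS]; trivial
  have hv' : (⟨x.v, 1⟩ : Asym D) ∈ N := hv
  have := h2 _ hv' _ (hT' x.t)
  convert this using 1
  ext <;> simp

theorem simp_of {c : T} (hc0 : c ≠ 0)
    (hc : ∀ M : Set T, IsIdl M → c ∈ M → M = Set.univ)
    (hV : ∀ S : AddSubgroup V, (∀ (g : T) (u : V), u - g • u ∈ S) → S = ⊤)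
    (hf : ∀ g : T, g ≠ 1 → ∃ u : V, u - g • u ≠ 0)
    (hb : ∀ v : V, v ≠ 0 → ∃ w, D.b w v = c)
    (N : Set (Asym D)) (hN : IsIdl N) : N = {0} ∨ N = Set.univ := by
  by_cases h : ∃ x ∈ N, x ≠ (0 : Asym D)
  · right
    obtain ⟨x, hx, hx0⟩ := h
    have : ∃ g : T, g ≠ 1 ∧ (⟨0, g⟩ : Asym D) ∈ N := by
      by_cases hv : x.v = 0
      · refine ⟨x.t, ?_, ?_⟩
        · intro e; apply hx0; ext
          · exact hv
          · simp [e, one_eq_zero]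
        · rw [← hv]; exact hx
      · obtain ⟨w, hw⟩ := hb _ hv
        refine ⟨_, ?_, b_mem hN hx w⟩
        rw [hw, Ne, inv_mul_eq_one]
        intro e
        apply hc0
        have : x.t - (x.t - c) = 0 := by rw [← e]; simp
        simpa using this
    obtain ⟨g, hg, hgN⟩ := this
    obtain ⟨u, hu⟩ := hf g hg
    have h1 := comm_mem hN hgN u
    obtain ⟨w, hw⟩ := hb _ hu
    have h2 := b_mem hN h1 (-w)
    refine gen hN hc hV ?_
    convert h2 using 2
    rw [map_neg, AddMonoidHom.neg_apply, hw]
    simp only [inv_one, one_mul, sub_neg_eq_add]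
    rw [one_eq_zero, zero_add]
  · left
    push Not at h
    ext x
    constructor
    · exact fun hx => h x hx
    · rintro rfl
      have := hN.1
      rwa [one_eq_zero] at this

end Asym

/-- sign-induced module -/
def SV {T : Type} [Group T] (z : T) : AddSubgroup (T → ZMod 3) where
  carrier := {f | ∀ t, f (t * z) = - f t}
  zero_mem' := by intro t; simp
  add_mem' := by
    intro a b ha hb t
    simp [ha t, hb t, add_comm]
  neg_mem' := by
    intro a ha t
    simp [ha t]

namespace SV

variable {T : Type} [Group T] {z : T}

instance : DistribMulAction T (SV z) where
  smul g f := ⟨fun t => f.1 (g⁻¹ * t), fun t => by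
    change f.1 (g⁻¹ * (t * z)) = - f.1 (g⁻¹ * t)
    rw [← mul_assoc]; exact f.2 _⟩
  one_smul f := by
    apply Subtype.ext; funext t
    change f.1 (1⁻¹ * t) = f.1 t
    simp
  mul_smul g h f := by
    apply Subtype.ext; funext t
    change f.1 ((g * h)⁻¹ * t) = f.1 (h⁻¹ * (g⁻¹ * t))
    simp [mul_assoc]
  smul_zero g := rfl
  smul_add g f h := rfl

theorem smul_apply (g : T) (f : SV z) (t : T) : (g • f).1 t = f.1 (g⁻¹ * t) := rfl

instance [Finite T] : Finite (SV z) := by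
  infer_instance

variable [DecidableEq T]

def e (hz : z * z = 1) (t : T) : SV z :=
  ⟨fun x => (if x = t then 1 else 0) - (if x = t * z then 1 else 0), by
    intro x
    have h1 : x * z = t ↔ x = t * z := by
      constructor
      · rintro rfl; simp [mul_assoc, hz]
      · rintro rfl; simp [mul_assoc, hz]
    simp [h1]⟩

theorem e_apply (hz : z * z = 1) (t x : T) :
    (e hz t).1 x = (if x = t then 1 else 0) - (if x = t * z then 1 else 0) := rfl

theorem smul_e (hz : z * z = 1) (g t : T) : g • e hz t = e hz (g * t) := by
  apply Subtype.ext; funext x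
  rw [smul_apply, e_apply, e_apply]
  simp [inv_mul_eq_iff_eq_mul, mul_assoc]

theorem e_z (hz : z * z = 1) (t : T) : e hz (t * z) = - e hz t := by
  apply Subtype.ext; funext x
  change (e hz (t * z)).1 x = - (e hz t).1 x
  rw [e_apply, e_apply]
  simp [mul_assoc, hz]

theorem three (f : SV z) : f + f + f = 0 := by
  apply Subtype.ext; funext x
  change f.1 x + f.1 x + f.1 x = 0
  generalize f.1 x = a
  revert a; decide

theorem span (hz : z * z = 1) [Finite T] (S : AddSubgroup (SV z)) (hS : ∀ (g : T) (u : SV z), u - g • u ∈ S) :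
    S = ⊤ := by
  classical
  have := Fintype.ofFinite T
  have he : ∀ t, e hz t ∈ S := by
    intro t
    have := hS (t * z * t⁻¹) (e hz t)
    rw [smul_e, inv_mul_cancel_right, e_z] at this
    have h2 := S.neg_mem this
    have h3 := three (e hz t)
    convert h2 using 1
    rw [eq_comm, ← sub_eq_zero, ← neg_eq_zero, ← h3]
    abel
  rw [eq_top_iff]
  intro f _
  have hs : ∑ t, (f.1 t).val • e hz t ∈ S := S.sum_mem fun t _ => S.nsmul_mem (he t) _
  have h2 := S.neg_mem hs
  convert h2 using 1
  apply Subtype.ext; funext x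
  have hsum : (∑ t, (f.1 t).val • e hz t).1 x = ∑ t, f.1 t * (e hz t).1 x := by
    rw [AddSubgroup.val_finset_sum, Finset.sum_apply]
    refine Finset.sum_congr rfl fun t _ => ?_
    change ((f.1 t).val • (e hz t).1 x) = _
    rw [nsmul_eq_mul, ZMod.natCast_zmod_val]
  change f.1 x = - (∑ t, (f.1 t).val • e hz t).1 x
  rw [hsum]
  have h1 : ∀ t : T, x = t * z ↔ x * z = t := by
    intro t
    constructor
    · rintro rfl; simp [mul_assoc, hz]
    · rintro rfl; simp [mul_assoc, hz]
  simp only [e_apply, h1, mul_sub, mul_ite, mul_one, mul_zero, Finset.sum_sub_distrib,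
    Finset.sum_ite_eq, Finset.mem_univ, if_true, f.2 x]
  generalize f.1 x = a
  revert a; decide

theorem sq (hz : z * z = 1) (hz1 : z ≠ 1) (g : T) (hg : g ≠ 1) : ∃ u : SV z, u - g • u ≠ g • u - g • g • u := by
  refine ⟨e hz 1, fun h => ?_⟩
  rw [smul_e, smul_e, mul_one] at h
  have hh : ∀ x, (e hz 1).1 x - (e hz g).1 x = (e hz g).1 x - (e hz (g * g)).1 x :=
    fun x => congrFun (congrArg Subtype.val h) x
  have h1 := hh 1
  have h2 := hh g
  simp only [e_apply] at h1 h2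
  have a1 : ¬ (1 : T) = z := fun e => hz1 e.symm
  have a2 : ¬ (1 : T) = g := fun e => hg e.symm
  have a5 : ¬ g = g * z := fun e => hz1 (by simpa using e.symm)
  have a6 : ¬ g = g * g := fun e => hg (by simpa using e.symm)
  by_cases hgz : g = z
  · subst hgz
    simp [a1, hz] at h1
    revert h1; decide
  have a3 : ¬ (1 : T) = g * z := fun e => hgz (by
    have := congrArg (· * z) e
    simp [mul_assoc, hz] at this
    exact this.symm)
  have a4 : ¬ g = g * g * z := fun e => a3 (by
    rw [mul_assoc] at e
    exact (mul_eq_left.1 e.symm).symm)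
  simp [a1, a2, a3, a4, a5, a6, hg, hgz] at h1 h2
  revert h2; decide

/-- the form -/
def form [Fintype T] (z : T) : SV z →+ SV z →+ ZMod 3 :=
  AddMonoidHom.mk' (fun f => AddMonoidHom.mk' (fun g => ∑ t, f.1 t * g.1 t)
    (by intro a b; simp [mul_add, Finset.sum_add_distrib]))
    (by intro a b; ext g; simp [add_mul, Finset.sum_add_distrib])

theorem form_apply [Fintype T] (f g : SV z) : form z f g = ∑ t, f.1 t * g.1 t := rfl

theorem form_symm [Fintype T] (f g : SV z) : form z f g = form z g f := by
  simp [form_apply, mul_comm]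

theorem form_smul [Fintype T] (a : T) (f g : SV z) : form z (a • f) (a • g) = form z f g := by
  simp only [form_apply, smul_apply]
  exact Fintype.sum_equiv (Equiv.mulLeft a⁻¹) _ _ (fun x => rfl)

theorem form_nondeg (hz : z * z = 1) [Fintype T] (f : SV z) (hf : f ≠ 0) : ∃ w, form z w f = 1 := by
  have : ∃ t, f.1 t ≠ 0 := by
    by_contra h
    push Not at h
    exact hf (Subtype.ext (funext h))
  obtain ⟨t, ht⟩ := this
  have h1 : form z (e hz t) f = - f.1 t := by
    rw [form_apply]
    simp only [e_apply, sub_mul, ite_mul, one_mul, zero_mul, Finset.sum_sub_distrib,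
      Finset.sum_ite_eq', Finset.mem_univ, if_true, f.2 t]
    generalize f.1 t = a
    revert a; decide
  refine ⟨(-f.1 t).val • e hz t, ?_⟩
  rw [map_nsmul, AddMonoidHom.nsmul_apply, h1, nsmul_eq_mul, ZMod.natCast_zmod_val]
  revert ht
  generalize f.1 t = a
  revert a; decide

end SV

def P (k : ℕ) : Prop :=
  ∃ (T : Type) (_ : LBrace T) (z c : T), Finite T ∧ z ≠ 1 ∧ z * z = 1 ∧ (3 : ℤ) • c = 0 ∧
    (∀ g : T, g * c = g + c) ∧ (∀ M : Set T, IsIdl M → c ∈ M → M = Set.univ) ∧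
    derivedSeries T (k + 2) = ⊥ ∧ derivedSeries T (k + 1) ≠ ⊥

def zeroData (V T : Type) [AddCommGroup V] [LBrace T] [DistribMulAction T V] : AsymData V T where
  b := 0
  symm := by simp
  equi := by simp [mul_zero']

theorem P_step_gen {V T : Type} [AddCommGroup V] [LBrace T] [DistribMulAction T V] {c : T}
    (hc3 : (3 : ℤ) • c = 0) (hcl : ∀ g : T, g * c = g + c)
    (hc : ∀ M : Set T, IsIdl M → c ∈ M → M = Set.univ)
    (hV : ∀ S : AddSubgroup V, (∀ (g : T) (u : V), u - g • u ∈ S) → S = ⊤) :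
    ∃ c' : Asym (zeroData V T), (3 : ℤ) • c' = 0 ∧ (∀ g, g * c' = g + c') ∧
      (∀ M : Set (Asym (zeroData V T)), IsIdl M → c' ∈ M → M = Set.univ) := by
  refine ⟨⟨0, c⟩, ?_, ?_, ?_⟩
  · have : (3 : ℤ) = 1 + 1 + 1 := by norm_num
    rw [this, add_zsmul, add_zsmul, one_zsmul] at hc3 ⊢
    ext
    · simp
    · simp only [Asym.add_t, Asym.zero_t, map_zero, add_zero]
      exact hc3
  · intro g
    ext
    · simp
    · simp only [Asym.mul_t, Asym.add_t, map_zero, add_zero, hcl]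
  · intro M hM hcM
    exact Asym.gen hM hc hV hcM

theorem P_step {k : ℕ} (h : P k) : P (k + 1) := by
  classical
  obtain ⟨T, _, z, c, hfin, hz1, hz, hc3, hcl, hc, hd1, hd2⟩ := h
  obtain ⟨c', h1, h2, h3⟩ := P_step_gen (V := SV z) hc3 hcl hc (SV.span hz)
  refine ⟨Asym (zeroData (SV z) T), inferInstance, ⟨0, z⟩, c', inferInstance, ?_, ?_, h1, h2, h3,
    Asym.der_bot hd1, Asym.der_ne_bot hd2 (SV.sq hz hz1)⟩
  · intro e; exact hz1 (congrArg Asym.t e)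
  · ext <;> simp [hz]

def C3 : Type := ZMod 3
instance : AddCommGroup C3 := inferInstanceAs (AddCommGroup (ZMod 3))
instance : Group C3 := inferInstanceAs (Group (Multiplicative (ZMod 3)))
instance : Fintype C3 := inferInstanceAs (Fintype (ZMod 3))
instance : DecidableEq C3 := inferInstanceAs (DecidableEq (ZMod 3))
def C3c : C3 := (1 : ZMod 3)
theorem C3_mul (a b : C3) : a * b = a + b := rfl
instance : LBrace C3 :=
  { (inferInstance : Group C3), (inferInstance : AddCommGroup C3) with
    compat := by
      intro a b c
      simp only [C3_mul]
      abel }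

def V4 : Type := ZMod 2 × ZMod 2
instance : AddCommGroup V4 := inferInstanceAs (AddCommGroup (ZMod 2 × ZMod 2))
instance : Fintype V4 := inferInstanceAs (Fintype (ZMod 2 × ZMod 2))
instance : DecidableEq V4 := inferInstanceAs (DecidableEq (ZMod 2 × ZMod 2))
def V4c : V4 := ((1, 0) : ZMod 2 × ZMod 2)
def rot (x : V4) : V4 := (x.2, x.1 + x.2)
instance : SMul C3 V4 := ⟨fun t v => rot^[ZMod.val (n := 3) t] v⟩
instance : DistribMulAction C3 V4 where
  one_smul := by decide
  mul_smul := by decide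
  smul_zero := by decide
  smul_add := by decide

theorem V4_surj : ∀ v : V4, ∃ (g : C3) (u : V4), v = u - g • u := by decide

theorem V4_sq : ∀ g : C3, g ≠ 1 → ∃ u : V4, u - g • u ≠ g • u - g • g • u := by decide

theorem C3_gen (M : Set C3) (hM : IsIdl M) (hc : C3c ∈ M) : M = Set.univ := by
  have key : ∀ x : C3, x = 1 ∨ x = C3c ∨
    x = C3c * C3c := by decide
  ext x
  simp only [Set.mem_univ, iff_true]
  rcases key x with h | h | h
  · rw [h]; exact hM.1
  · rw [h]; exact hc
  · rw [h]; exact hM.2.1 _ hc _ hc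

theorem P_zero : P 0 := by
  obtain ⟨c', h1, h2, h3⟩ := P_step_gen (V := V4) (T := C3) (c := C3c)
    (by decide) (by decide) C3_gen (by
      intro S hS
      rw [eq_top_iff]
      intro v _
      obtain ⟨g, u, rfl⟩ := V4_surj v
      exact hS g u)
  have hcomm : derivedSeries C3 1 = ⊥ := by
    rw [derivedSeries_one, commutator_def, eq_bot_iff, Subgroup.commutator_le]
    intro x _ y _
    rw [Subgroup.mem_bot, commutatorElement_eq_one_iff_mul_comm, C3_mul, C3_mul, add_comm]
  have hnt : derivedSeries C3 0 ≠ ⊥ := by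
    rw [derivedSeries_zero]
    intro h
    have : C3c ∈ (⊥ : Subgroup C3) := by rw [← h]; trivial
    rw [Subgroup.mem_bot] at this
    revert this; decide
  refine ⟨Asym (zeroData V4 C3), inferInstance, ⟨V4c, 1⟩, c',
    inferInstance, ?_, ?_, h1, h2, h3,
    Asym.der_bot hcomm, Asym.der_ne_bot hnt V4_sq⟩
  · intro e
    have := congrArg Asym.v e
    revert this
    simp only [Asym.one_v]
    decide
  · ext
    · simp only [Asym.mul_v, Asym.one_v]; decide
    · simp

theorem P_all (k : ℕ) : P k := by
  induction k with
  | zero => exact P_zero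
  | succ k ih => exact P_step ih

def lastData {T : Type} [LBrace T] [Fintype T] [DecidableEq T] (z c : T)
    (hc3 : (3 : ℤ) • c = 0) (hcl : ∀ g : T, g * c = g + c) : AsymData (SV z) T where
  b := (AddMonoidHom.compHom (ZMod.lift 3 ⟨zmultiplesHom T c, by simpa using hc3⟩)).comp
    (SV.form z)
  symm := by intro v w; simp [SV.form_symm v w]
  equi := by
    intro g v w
    simp only [AddMonoidHom.comp_apply, AddMonoidHom.compHom_apply_apply, SV.form_smul]
    have hn : ∀ n : ℕ, g * (n • c) = g + n • c := by
      intro n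
      induction n with
      | zero => simp [mul_zero']
      | succ n ih => rw [succ_nsmul, mul_add', ih, hcl]; abel
    generalize SV.form z v w = a
    obtain ⟨n, rfl⟩ := ZMod.natCast_zmod_surjective a
    have := ZMod.lift_coe 3 ⟨zmultiplesHom T c, by simpa using hc3⟩ (n : ℤ)
    simp only [Int.cast_natCast] at this
    rw [this]
    simp [hn]

theorem lastData_b {T : Type} [LBrace T] [Fintype T] [DecidableEq T] (z c : T)
    (hc3 : (3 : ℤ) • c = 0) (hcl : ∀ g : T, g * c = g + c) (v w : SV z)
    (h : SV.form z v w = 1) : (lastData z c hc3 hcl).b v w = c := by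
  simp only [lastData, AddMonoidHom.comp_apply, AddMonoidHom.compHom_apply_apply, h]
  have := ZMod.lift_coe 3 ⟨zmultiplesHom T c, by simpa using hc3⟩ (1 : ℤ)
  simp only [Int.cast_one] at this
  rw [this]
  simp

/-- for every integer `n ≥ 2` there exists a finite simple non-trivial
left brace whose multiplicative group is solvable of derived length exactly `n + 1`. -/
theorem exists_simple_brace_of_derived_length (n : ℕ) (hn : 2 ≤ n) :
    Nonempty (SimpleSolvableBraceWitness n) := by
  classical
  obtain ⟨k, rfl⟩ := Nat.exists_eq_add_of_le' hn
  obtain ⟨T, _, z, c, hfin, hz1, hz, hc3, hcl, hc, hd1, hd2⟩ := P_all k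
  have := Fintype.ofFinite T
  let D := lastData z c hc3 hcl
  have hf : ∀ g : T, g ≠ 1 → ∃ u : SV z, u - g • u ≠ 0 := by
    intro g hg
    obtain ⟨u, hu⟩ := SV.sq hz hz1 g hg
    refine ⟨u, fun h => hu ?_⟩
    rw [← smul_sub, h, smul_zero]
  have hc0 : c ≠ 0 := by
    intro h0
    have h := hc {1} ⟨rfl, by simp, by simp, by simp, by
      intro b x hx
      rw [Set.mem_singleton_iff.1 hx, mul_one, sub_self, one_eq_zero]; rfl⟩
      (by rw [h0, one_eq_zero]; rfl)
    have : z ∈ ({1} : Set T) := by rw [h]; trivial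
    exact hz1 this
  have hder := Asym.der_ne_bot (D := D) hd2 (SV.sq hz hz1)
  refine ⟨SimpleSolvableBraceWitness.mk (Asym D) LBrace.compat inferInstance
    ?_ ?_ ?_ ⟨Asym.der_bot hd1, ?_⟩⟩
  · obtain ⟨u, hu⟩ := hf z hz1
    refine ⟨⟨0, z⟩, ⟨u, 1⟩, fun h => hu ?_⟩
    have := congrArg Asym.v h
    simp at this
    rw [this, sub_self]
  · refine ⟨⟨0, z⟩, fun h => hz1 ?_⟩
    have := congrArg Asym.t h
    simpa [one_eq_zero] using this
  · intro N hN
    refine Asym.simp_of hc0 hc (SV.span hz) hf ?_ N hN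
    intro v hv
    obtain ⟨w, hw⟩ := SV.form_nondeg hz v hv
    exact ⟨w, lastData_b z c hc3 hcl w v hw⟩
  · intro m hm h
    apply hder
    rw [eq_bot_iff, ← h]
    exact derivedSeries_antitone (G := Asym D) (by omega)
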